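/- arXiv:2312.01159 — 11 statements merged into one kernel-verified Lean document; each statement's English description precedes it below -/
import Mathlib

section
/- For every 3-coloring f of the grid [2593] × [2593] (i.e., every function f from {1,...,2593} × {1,...,2593} to a set of 3 colors), there exists a monochromatic L; that is, there exist positive integers i, j, t with i + t ≤ 2593 and j + t ≤ 2593 such that f(i, j) = f(i, j + t) = f(i + t, j + t). -/
/-!
Keep a set `S` of integers together with a shift `h`, so that the triangle of points `(p, q + h)`
with `p ≤ q` in `S` avoids a set `K` of colors; at the start `K` is empty. By pigeonhole many
points `(p, p + h)` of its diagonal share a color `r ∉ K`. Any two of them span an `L`, whose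
corner lies in the triangle, so if no `L` is monochromatic the rest of the triangle over these `p`
avoids `r` too. Some difference `d` occurs often among these `p`; shifting by `d` discards the
diagonal and leaves a smaller triangle that avoids `insert r K`. A nonempty triangle cannot avoid
every color.
-/

open Finset

variable {α : Type*}

section CeilDiv

variable {R M : Type*} [AddCommMonoid R] [LinearOrder R] [AddCommMonoid M] [PartialOrder M]
  [SMulZeroClass R M] [CeilDiv R M]

theorem ceilDiv_le_of_le_smul {a : R} {b c : M} (hc : 0 ≤ c) (h : b ≤ a • c) : b ⌈/⌉ a ≤ c := by
  obtain ha | ha := le_or_gt a 0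
  · rwa [ceilDiv_of_nonpos ha]
  · exact (ceilDiv_le_iff_le_smul ha).2 h

theorem ceilDiv_mono_left (a : R) : Monotone fun b : M ↦ b ⌈/⌉ a := by
  obtain ha | ha := le_or_gt a 0
  · simp only [ceilDiv_of_nonpos ha, monotone_const]
  · exact (gc_smul_ceilDiv ha).monotone_l

end CeilDiv

theorem exists_card_le_card_mul_card_fiber {ι : Type*} [DecidableEq α] {s : Finset ι}
    {t : Finset α} {g : ι → α} (hg : ∀ a ∈ s, g a ∈ t) (ht : t.Nonempty) :
    ∃ y ∈ t, #s ≤ #t * #{a ∈ s | g a = y} := by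
  obtain ⟨y, hy, hmax⟩ := t.exists_max_image (fun y ↦ #{a ∈ s | g a = y}) ht
  exact ⟨y, hy, (card_le_mul_card_image_of_maps_to hg _ hmax).trans_eq (mul_comm _ _)⟩

theorem exists_popular_difference {a b : ℕ} {S : Finset ℕ} (hS : S ⊆ Icc a b) :
    ∃ d, 1 ≤ d ∧ (#S).choose 2 ≤ (b - a) * #{p ∈ S | p + d ∈ S} := by
  let lowerEnds (d : ℕ) : Finset ℕ := {p ∈ S | p + d ∈ S}
  let pairs (d : ℕ) : Finset (Finset ℕ) := (lowerEnds d).image fun p ↦ {p, p + d}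
  have pairs_cover : S.powersetCard 2 ⊆ (Icc 1 (b - a)).biUnion pairs := by
    intro P hP
    obtain ⟨hPS, hP2⟩ := mem_powersetCard.1 hP
    obtain ⟨x, y, hxy, rfl⟩ := card_eq_two.1 hP2
    wlog hlt : x < y generalizing x y
    · rw [pair_comm] at hP hPS hP2 ⊢
      exact this y x hxy.symm hP hPS hP2 (by omega)
    have hx : x ∈ S := hPS (by simp)
    have hy : y ∈ S := hPS (by simp)
    have hxI := mem_Icc.1 (hS hx)
    have hyI := mem_Icc.1 (hS hy)
    have hadd : x + (y - x) = y := by omega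
    refine mem_biUnion.2 ⟨y - x, mem_Icc.2 (by omega), mem_image.2 ⟨x, ?_, by rw [hadd]⟩⟩
    exact mem_filter.2 ⟨hx, by rwa [hadd]⟩
  have choose_le {n : ℕ} (hn : ∀ d ∈ Icc 1 (b - a), #(lowerEnds d) ≤ n) :
      (#S).choose 2 ≤ (b - a) * n := by
    calc (#S).choose 2 = #(S.powersetCard 2) := (card_powersetCard 2 S).symm
      _ ≤ #((Icc 1 (b - a)).biUnion pairs) := card_le_card pairs_cover
      _ ≤ #(Icc 1 (b - a)) * n :=
        card_biUnion_le_card_mul _ _ _ fun d hd ↦ card_image_le.trans (hn d hd)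
      _ = (b - a) * n := by rw [Nat.card_Icc, Nat.add_sub_cancel]
  obtain hab | hab := (Icc 1 (b - a)).eq_empty_or_nonempty
  · exact ⟨1, le_rfl, choose_le (by simp [hab])⟩
  · obtain ⟨d, hd, hmax⟩ := (Icc 1 (b - a)).exists_max_image (fun d ↦ #(lowerEnds d)) hab
    exact ⟨d, (mem_Icc.1 hd).1, choose_le hmax⟩

/-- The coloring `f` has a monochromatic `L` inside the grid `{1, …, N} × {1, …, N}`. -/
def HasMonochromaticL (f : ℕ × ℕ → α) (N : ℕ) : Prop :=
  ∃ i j t : ℕ, 1 ≤ i ∧ 1 ≤ j ∧ 1 ≤ t ∧ i + t ≤ N ∧ j + t ≤ N ∧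
    f (i, j) = f (i, j + t) ∧ f (i, j) = f (i + t, j + t)

/-- The points `(p, q + h)` with `p ≤ q` in `S` form a triangle inside the grid
`{1, …, N} × {1, …, N}`, and `f` takes no value in `K` on it. -/
structure IsAvoidingTriangle (f : ℕ × ℕ → α) (N : ℕ) (K : Finset α) (S : Finset ℕ) (h : ℕ) :
    Prop where
  one_le : ∀ p ∈ S, 1 ≤ p
  add_le : ∀ p ∈ S, p + h ≤ N
  notMem : ∀ p ∈ S, ∀ q ∈ S, p ≤ q → f (p, q + h) ∉ K

/-- A lower bound for the size of the base of the triangle obtained by discarding one more color,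
when the current base has size `s` and `k` colors remain: the first division comes from the
pigeonhole principle, the second from the `N - 1` possible differences. Division by `0` gives the
bound `0`. -/
def refinedSize (N k s : ℕ) : ℕ := (s ⌈/⌉ k).choose 2 ⌈/⌉ (N - 1)

/-- A lower bound for the size of the base of the triangle once all `k` remaining colors have been
discarded, starting from a base of size `s`. -/
def finalSize (N : ℕ) : ℕ → ℕ → ℕ
  | 0, s => s
  | k + 1, s => finalSize N k (refinedSize N (k + 1) s)

theorem refinedSize_mono (N k : ℕ) : Monotone (refinedSize N k) := fun _ _ hst ↦
  ceilDiv_mono_left _ (Nat.choose_le_choose 2 (ceilDiv_mono_left k hst))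

theorem finalSize_mono (N k : ℕ) : Monotone (finalSize N k) := by
  induction k with
  | zero => exact monotone_id
  | succ k ih => exact ih.comp (refinedSize_mono N (k + 1))

namespace IsAvoidingTriangle

variable {f : ℕ × ℕ → α} {N : ℕ} {K : Finset α} {S : Finset ℕ} {h : ℕ}

theorem initial (f : ℕ × ℕ → α) (N : ℕ) : IsAvoidingTriangle f N ∅ (Icc 1 N) 0 where
  one_le _ hp := (mem_Icc.1 hp).1
  add_le _ hp := (mem_Icc.1 hp).2
  notMem _ _ _ _ _ := notMem_empty _

theorem subset_Icc (hS : IsAvoidingTriangle f N K S h) : S ⊆ Icc 1 N := fun p hp ↦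
  mem_Icc.2 ⟨hS.one_le p hp, (Nat.le_add_right p h).trans (hS.add_le p hp)⟩

theorem apply_ne_of_diagonal_eq (hS : IsAvoidingTriangle f N K S h)
    (hf : ¬HasMonochromaticL f N) {p q : ℕ} {r : α} (hp : p ∈ S) (hq : q ∈ S) (hpq : p < q)
    (hfp : f (p, p + h) = r) (hfq : f (q, q + h) = r) : f (p, q + h) ≠ r := by
  obtain ⟨t, rfl⟩ := Nat.exists_eq_add_of_lt hpq
  intro hcorner
  have hp1 := hS.one_le p hp
  have hqN := hS.add_le _ hq
  have hadd : p + h + (t + 1) = p + t + 1 + h := by ring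
  refine hf ⟨p, p + h, t + 1, hp1, by omega, by omega, by omega, by omega, ?_, ?_⟩
  · rw [hadd, hfp, hcorner]
  · rw [hadd, ← add_assoc, hfp, hfq]

variable [DecidableEq α]

theorem insert_color (hS : IsAvoidingTriangle f N K S h) (hf : ¬HasMonochromaticL f N)
    {C : Finset ℕ} (hCS : C ⊆ S) {r : α} (hC : ∀ p ∈ C, f (p, p + h) = r) {d : ℕ} (hd : 1 ≤ d) :
    IsAvoidingTriangle f N (insert r K) {p ∈ C | p + d ∈ C} (d + h) where
  one_le p hp := hS.one_le p (hCS (mem_filter.1 hp).1)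
  add_le p hp := by
    rw [← add_assoc]
    exact hS.add_le _ (hCS (mem_filter.1 hp).2)
  notMem p hp q hq hpq := by
    have hpC := (mem_filter.1 hp).1
    have hqC := (mem_filter.1 hq).2
    have hlt : p < q + d := by omega
    rw [← add_assoc, mem_insert, not_or]
    exact ⟨hS.apply_ne_of_diagonal_eq hf (hCS hpC) (hCS hqC) hlt (hC p hpC) (hC _ hqC),
      hS.notMem p (hCS hpC) _ (hCS hqC) hlt.le⟩

variable [Fintype α]

theorem exists_refinement (hS : IsAvoidingTriangle f N K S h) (hf : ¬HasMonochromaticL f N)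
    (hK : Kᶜ.Nonempty) :
    ∃ r ∈ Kᶜ, ∃ T h', IsAvoidingTriangle f N (insert r K) T h' ∧ refinedSize N #Kᶜ #S ≤ #T := by
  have diagonal_mem : ∀ p ∈ S, f (p, p + h) ∈ Kᶜ := fun p hp ↦
    mem_compl.2 (hS.notMem p hp p hp le_rfl)
  obtain ⟨r, hr, hcardC⟩ := exists_card_le_card_mul_card_fiber diagonal_mem hK
  set C : Finset ℕ := {p ∈ S | f (p, p + h) = r}
  have hCS : C ⊆ S := filter_subset _ S
  obtain ⟨d, hd, hcardT⟩ := exists_popular_difference (hCS.trans hS.subset_Icc)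
  refine ⟨r, hr, _, _, hS.insert_color hf hCS (fun p hp ↦ (mem_filter.1 hp).2) hd, ?_⟩
  exact ceilDiv_le_of_le_smul (Nat.zero_le _)
    ((Nat.choose_le_choose 2 (ceilDiv_le_of_le_smul (Nat.zero_le _) hcardC)).trans hcardT)

theorem hasMonochromaticL (hS : IsAvoidingTriangle f N K S h)
    (hpos : 0 < finalSize N #Kᶜ #S) : HasMonochromaticL f N := by
  by_contra hf
  induction hk : #Kᶜ generalizing K S h with
  | zero =>
    rw [hk] at hpos
    obtain ⟨p, hp⟩ := card_pos.1 hpos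
    have hKuniv : K = univ := (compl_eq_empty_iff K).1 (card_eq_zero.1 hk)
    exact hS.notMem p hp p hp le_rfl (hKuniv ▸ mem_univ _)
  | succ k ih =>
    have hK : Kᶜ.Nonempty := card_pos.1 (by omega)
    obtain ⟨r, hr, T, h', hT, hcard⟩ := hS.exists_refinement hf hK
    have hk' : #(insert r K)ᶜ = k := by
      rw [compl_insert, card_erase_of_mem hr, hk, Nat.add_sub_cancel]
    refine ih hT ?_ hk'
    rw [hk] at hpos hcard
    rw [hk']
    exact hpos.trans_le (finalSize_mono N k hcard)

end IsAvoidingTriangle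

theorem R3L_upper_general [Fintype α] {N : ℕ} (hN : 0 < finalSize N (Fintype.card α) N)
    (f : ℕ × ℕ → α) : HasMonochromaticL f N := by
  classical
  exact (IsAvoidingTriangle.initial f N).hasMonochromaticL (by simpa using hN)

/-- Theorem 2.3: every 3-coloring of the `[2593] × [2593]` grid contains a
monochromatic `L`, i.e. `R₃(L) ≤ 2593`. -/
theorem R3L_upper (f : ℕ × ℕ → Fin 3) :
    ∃ i j t : ℕ, 1 ≤ i ∧ 1 ≤ j ∧ 1 ≤ t ∧ i + t ≤ 2593 ∧ j + t ≤ 2593 ∧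
      f (i, j) = f (i, j + t) ∧ f (i, j) = f (i + t, j + t) :=
  -- The bases have sizes `2593`, `145`, `2`, `1`; starting from `2592` the last bound would be `0`.
  R3L_upper_general (by simp [finalSize, refinedSize, Nat.ceilDiv_eq_add_pred_div,
    Nat.choose_two_right]) f
end

section
/- For every positive integer c there exists a positive integer n with n > c such that every c-coloring f of the grid [n] × [n] (every function f from {1,...,n} × {1,...,n} to a set of c colors) contains a monochromatic L; that is, there exist positive integers i, j, t with i + t ≤ n and j + t ≤ n such that f(i, j) = f(i, j + t) = f(i + t, j + t). -/
/-!
Summing coordinates sends the points of a combinatorial line over a finite set `S` to a homothetic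
copy `a • S + b`, so the Hales–Jewett theorem gives the Gallai–Witt theorem. Hales–Jewett is itself
finitary: only the finitely many coordinate sums of one cube `ι → S` ever occur, which confines
the copies to a finite set chosen before the coloring. An `L` is a homothetic copy of
`{(0, 0), (0, 1), (1, 1)}`.
-/

open Combinatorics

theorem exists_sum_line_eq_nsmul_add {ι α M : Type*} [Fintype ι] [AddCommMonoid M]
    (l : Line α ι) (φ : α → M) :
    ∃ a > 0, ∃ b : M, ∀ x, ∑ i, φ (l x i) = a • φ x + b := by
  classical
  obtain ⟨i₀, hi₀⟩ := l.proper
  refine ⟨({i | l.idxFun i = none} : Finset ι).card, Finset.card_pos.2 ⟨i₀, by simpa using hi₀⟩,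
    ∑ i, (l.idxFun i).elim 0 φ, fun x => ?_⟩
  have coord_eq (i : ι) :
      φ (l x i) = (if l.idxFun i = none then φ x else 0) + (l.idxFun i).elim 0 φ := by
    rw [Line.apply_def]
    cases h : l.idxFun i <;> simp [h]
  simp only [coord_eq, Finset.sum_add_distrib, ← Finset.sum_filter, Finset.sum_const]

theorem exists_finset_mono_homothetic_copy {M : Type*} [AddCommMonoid M] (S : Finset M)
    (κ : Type*) [Finite κ] :
    ∃ T : Finset M, ∀ C : M → κ,
      ∃ a > 0, ∃ (b : M) (k : κ), ∀ s ∈ S, a • s + b ∈ T ∧ C (a • s + b) = k := by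
  classical
  obtain ⟨ι, _, hι⟩ := Line.exists_mono_in_high_dimension S κ
  let coordSum (v : ι → S) : M := ∑ i, (v i : M)
  refine ⟨Finset.univ.image coordSum, fun C => ?_⟩
  obtain ⟨l, k, hk⟩ := hι (C ∘ coordSum)
  obtain ⟨a, ha, b, hab⟩ := exists_sum_line_eq_nsmul_add l ((↑) : S → M)
  refine ⟨a, ha, b, k, fun s hs => ?_⟩
  have point_eq : coordSum (l ⟨s, hs⟩) = a • s + b := hab ⟨s, hs⟩
  rw [← point_eq]
  exact ⟨Finset.mem_image_of_mem _ (Finset.mem_univ _), hk ⟨s, hs⟩⟩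

/-- Theorem 2.1 (the `L` Number Theorem): for every positive `c` there is an `n > c`
such that every `c`-coloring of the `[n] × [n]` grid contains a monochromatic `L`. -/
theorem L_number_theorem (c : ℕ) (hc : 1 ≤ c) :
    ∃ n : ℕ, c < n ∧ ∀ f : ℕ × ℕ → Fin c,
      ∃ i j t : ℕ, 1 ≤ i ∧ 1 ≤ j ∧ 1 ≤ t ∧ i + t ≤ n ∧ j + t ≤ n ∧
        f (i, j) = f (i, j + t) ∧ f (i, j) = f (i + t, j + t) := by
  obtain ⟨T, hT⟩ :=
    exists_finset_mono_homothetic_copy ({(0, 0), (0, 1), (1, 1)} : Finset (ℕ × ℕ)) (Fin c)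
  obtain ⟨⟨m₁, m₂⟩, hm⟩ := T.exists_le
  refine ⟨m₁ + m₂ + c + 1, by omega, fun f => ?_⟩
  -- Translating by `(1, 1)` moves the copy, which may touch the axes, into the grid.
  obtain ⟨t, ht, ⟨x, y⟩, k, hk⟩ := hT fun p => f (p.1 + 1, p.2 + 1)
  have corner : f (x + 1, y + 1) = k := by simpa using (hk (0, 0) (by simp)).2
  have above : f (x + 1, y + 1 + t) = k := by
    simpa [add_assoc, add_comm, add_left_comm] using (hk (0, 1) (by simp)).2
  have opposite : f (x + 1 + t, y + 1 + t) = k := by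
    simpa [add_assoc, add_comm, add_left_comm] using (hk (1, 1) (by simp)).2
  have bound : t + x ≤ m₁ ∧ t + y ≤ m₂ := by
    simpa using hm _ (hk (1, 1) (by simp)).1
  exact ⟨x + 1, y + 1, t, by omega, by omega, ht, by omega, by omega,
    corner.trans above.symm, corner.trans opposite.symm⟩
end

section
/- For every positive integer c there exists a positive integer n with n > c such that every c-coloring f of [n] = {1,...,n} contains two integers of the same color that are a perfect cube apart; that is, there exist a ∈ [n] and a positive integer d with a + d³ ≤ n and f(a) = f(a + d³). -/
/-!
This is the case `P = {x ^ 3}` of the polynomial van der Waerden theorem for a finite family `P` of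
polynomials without constant term. Fix `p₁ ∈ P`. The van der Waerden property of the families of all
`p (x + h) - p h - p₁ x`, with `h` in a finite set, makes it possible to move a focus of `r` colors
so that either a monochromatic configuration appears or the focus gains a color, and the latter can
happen only as often as there are colors. So `P` has the property as soon as these derived families
have it. If `p₁` has minimal degree `m`, then the distinct leading terms of degree at least `m` in a
derived family correspond to those of `P` with one of degree `m` removed, so the multiset of the
degrees of the leading terms decreases in the Dershowitz–Manna order.
-/

open Filter Polynomial
open scoped Pointwise

section ColorFocusing

variable {D G κ : Type*} [AddMonoid D] [AddCommGroup G] {S : AddSubsemigroup D} {P : Set (D → G)}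
  {p₁ : D → G}

/-- The finitary van der Waerden property of a family `P` of maps `D → G`: every finite coloring of
`G` has a configuration `{a} ∪ {a + p d | p ∈ P}` of a single color with `d ∈ S`, where `a` and `d`
come from finite sets that depend only on the number of colors. The semigroup `S` stands for the
admissible differences, such as the positive integers. -/
def IsVdWFamily (S : AddSubsemigroup D) (P : Set (D → G)) : Prop :=
  ∀ k : ℕ, ∃ (A : Finset G) (E : Finset S), ∀ f : G → Fin k,
    ∃ a ∈ A, ∃ d ∈ E, ∀ p ∈ P, f (a + p d) = f a

/-- The derived family of `P` with respect to `p₁` and a set `H` of shifts, to which color focusing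
reduces `P`. -/
def derivedFamily (P : Set (D → G)) (p₁ : D → G) (H : Set D) : Set (D → G) :=
  Set.image2 (fun p h x => p (x + h) - p h - p₁ x) P H

/-- The point `a` is color-focused: each color in `C` is the color of a whole configuration
`{a + p d | p ∈ P}` with `d ∈ E`. The color of `a` itself is unrestricted. -/
def IsFocusedAt (P : Set (D → G)) (f : G → κ) (E : Finset S) (C : Finset κ) (a : G) : Prop :=
  ∀ c ∈ C, ∃ d ∈ E, ∀ p ∈ P, f (a + p d) = c

theorem IsVdWFamily.exists_of_finite (hP : IsVdWFamily S P) (κ : Type*) [Finite κ] :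
    ∃ (A : Finset G) (E : Finset S), ∀ f : G → κ,
      ∃ a ∈ A, ∃ d ∈ E, ∀ p ∈ P, f (a + p d) = f a := by
  obtain ⟨k, ⟨e⟩⟩ := Finite.exists_equiv_fin κ
  obtain ⟨A, E, h⟩ := hP k
  exact ⟨A, E, fun f => by simpa using h (e ∘ f)⟩

theorem IsVdWFamily.mono {Q : Set (D → G)} (hQ : IsVdWFamily S Q) (hPQ : P ⊆ Q) :
    IsVdWFamily S P := fun k => by
  obtain ⟨A, E, h⟩ := hQ k
  refine ⟨A, E, fun f => ?_⟩
  obtain ⟨a, ha, d, hd, had⟩ := h f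
  exact ⟨a, ha, d, hd, fun p hp => had p (hPQ hp)⟩

theorem IsVdWFamily.insert_zero (hP : IsVdWFamily S P) : IsVdWFamily S (insert 0 P) := fun k => by
  obtain ⟨A, E, h⟩ := hP k
  refine ⟨A, E, fun f => ?_⟩
  obtain ⟨a, ha, d, hd, had⟩ := h f
  exact ⟨a, ha, d, hd, by simpa using had⟩

theorem isVdWFamily_empty [Nonempty S] : IsVdWFamily S (∅ : Set (D → G)) := fun _ =>
  ⟨{0}, {Classical.arbitrary S}, by simp⟩

theorem IsFocusedAt.mono {f : G → κ} {E F : Finset S} {C : Finset κ} {a : G}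
    (h : IsFocusedAt P f E C a) (hEF : E ⊆ F) : IsFocusedAt P f F C a := fun c hc =>
  let ⟨d, hd, had⟩ := h c hc
  ⟨d, hEF hd, had⟩

-- Color a point `b` by the pattern that `f` shows on the translate by `b` of all points `a + p t`.
theorem IsVdWFamily.exists_shift_eq (hP : P.Finite) {H : Set D} (hH : H.Finite)
    (h : IsVdWFamily S (derivedFamily P p₁ H)) (A : Finset G) (κ : Type*) [Finite κ] :
    ∃ (B : Finset G) (F : Finset S), ∀ f : G → κ, ∃ b ∈ B, ∃ e ∈ F, ∀ a ∈ A, ∀ p ∈ P, ∀ t ∈ H,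
      f (b + a - p₁ e + p (e + t)) = f (b + (a + p t)) := by
  let W : Set G := Set.image2 (· + ·) A (Set.image2 (fun p t => p t) P H)
  have : Finite W := A.finite_toSet.image2 _ (hP.image2 _ hH)
  obtain ⟨B, F, hBF⟩ := h.exists_of_finite (W → κ)
  refine ⟨B, F, fun f => ?_⟩
  obtain ⟨b, hb, e, he, hbe⟩ := hBF fun b w => f (b + w)
  refine ⟨b, hb, e, he, fun a ha p hp t ht => ?_⟩
  have hw : a + p t ∈ W := ⟨a, ha, _, ⟨p, hp, t, ht, rfl⟩, rfl⟩
  have hpattern : f (b + (p (e + t) - p t - p₁ e) + (a + p t)) = f (b + (a + p t)) :=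
    congrFun (hbe _ ⟨p, hp, t, ht, rfl⟩) ⟨a + p t, hw⟩
  rw [← hpattern]
  congr 1
  abel

theorem IsFocusedAt.insert_shift [DecidableEq κ] [DecidableEq S] (hP0 : ∀ p ∈ P, p 0 = 0)
    {f : G → κ} {E : Finset S} {C : Finset κ} {a b : G} {e : S}
    (hC : IsFocusedAt P (fun x => f (b + x)) E C a)
    (he : ∀ p ∈ P, ∀ t ∈ insert 0 ((↑) '' (E : Set S)),
      f (b + a - p₁ e + p (e + t)) = f (b + (a + p t))) :
    IsFocusedAt P f (insert e (E.image (e + ·))) (insert (f (b + a)) C) (b + a - p₁ e) := by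
  intro c hc
  obtain rfl | hc := Finset.mem_insert.1 hc
  · refine ⟨e, Finset.mem_insert_self .., fun p hp => ?_⟩
    simpa [hP0 p hp] using he p hp 0 (Set.mem_insert ..)
  · obtain ⟨d, hd, hdc⟩ := hC c hc
    refine ⟨e + d, Finset.mem_insert_of_mem (Finset.mem_image_of_mem _ hd), fun p hp => ?_⟩
    exact (he p hp d (.inr ⟨d, hd, rfl⟩)).trans (hdc p hp)

theorem exists_monochromatic_or_isFocusedAt (hP : P.Finite) (hP0 : ∀ p ∈ P, p 0 = 0)
    (h : ∀ H : Set D, H.Finite → IsVdWFamily S (derivedFamily P p₁ H))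
    (κ : Type*) [Finite κ] (r : ℕ) :
    ∃ (A : Finset G) (E : Finset S), ∀ f : G → κ,
      (∃ a ∈ A, ∃ d ∈ E, ∀ p ∈ P, f (a + p d) = f a) ∨
      ∃ a ∈ A, ∃ C : Finset κ, C.card = r ∧ IsFocusedAt P f E C a := by
  classical
  induction r with
  | zero => exact ⟨{0}, ∅, fun f => .inr ⟨0, by simp, ∅, rfl, by simp [IsFocusedAt]⟩⟩
  | succ r ih =>
    obtain ⟨A, E, hAE⟩ := ih
    obtain ⟨B, F, hBF⟩ := (h _ ((E.finite_toSet.image (↑)).insert 0)).exists_shift_eq hP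
      ((E.finite_toSet.image (↑)).insert 0) A κ
    refine ⟨(B + A) ∪ (B + A - F.image fun e : S => p₁ e), E ∪ (F ∪ (F + E)), fun f => ?_⟩
    obtain ⟨b, hb, e, he, hbe⟩ := hBF f
    have monochromatic {a} (ha : a ∈ A) {d} (hd : d ∈ E)
        (had : ∀ p ∈ P, f (b + (a + p d)) = f (b + a)) :
        ∃ a ∈ (B + A) ∪ (B + A - F.image fun e : S => p₁ e), ∃ d ∈ E ∪ (F ∪ (F + E)),
          ∀ p ∈ P, f (a + p d) = f a :=
      ⟨b + a, Finset.mem_union_left _ (Finset.add_mem_add hb ha), d, Finset.mem_union_left _ hd,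
        by simpa only [add_assoc] using had⟩
    obtain ⟨a, ha, d, hd, had⟩ | ⟨a, ha, C, hCr, hC⟩ := hAE fun x => f (b + x)
    · exact .inl (monochromatic ha hd had)
    by_cases hfC : f (b + a) ∈ C
    · obtain ⟨d, hd, had⟩ := hC _ hfC
      exact .inl (monochromatic ha hd had)
    · refine .inr ⟨b + a - p₁ e, Finset.mem_union_right _ (Finset.sub_mem_sub
        (Finset.add_mem_add hb ha) (Finset.mem_image_of_mem _ he)), insert (f (b + a)) C,
        by rw [Finset.card_insert_of_notMem hfC, hCr], ?_⟩
      refine (hC.insert_shift hP0 (hbe a ha)).mono (Finset.insert_subset (by simp [he]) ?_)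
      refine Finset.image_subset_iff.2 fun d hd => ?_
      exact Finset.mem_union_right _ (Finset.mem_union_right _ (Finset.add_mem_add he hd))

theorem IsVdWFamily.of_derivedFamily (hP : P.Finite) (hP0 : ∀ p ∈ P, p 0 = 0)
    (h : ∀ H : Set D, H.Finite → IsVdWFamily S (derivedFamily P p₁ H)) : IsVdWFamily S P := by
  intro k
  obtain ⟨A, E, hAE⟩ := exists_monochromatic_or_isFocusedAt hP hP0 h (Fin k) (k + 1)
  refine ⟨A, E, fun f => (hAE f).resolve_right ?_⟩
  rintro ⟨-, -, C, hC, -⟩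
  have : C.card ≤ k := by simpa using C.card_le_univ
  omega

end ColorFocusing

theorem isDershowitzMannaLT_of_filter_le_erase {α : Type*} [LinearOrder α] {M N : Multiset α}
    {a : α} (ha : a ∈ N) (h : M.filter (a ≤ ·) ≤ N.erase a) : M.IsDershowitzMannaLT N := by
  obtain ⟨U, hU⟩ := Multiset.le_iff_exists_add.1 h
  refine ⟨M.filter (a ≤ ·), M.filter (¬ a ≤ ·), a ::ₘ U, Multiset.cons_ne_zero,
    (Multiset.filter_add_not _ M).symm, ?_, fun y hy => ⟨a, Multiset.mem_cons_self .., ?_⟩⟩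
  · rw [Multiset.add_cons, ← hU, Multiset.cons_erase ha]
  · exact not_le.1 (Multiset.mem_filter.1 hy).2

section PETInduction

variable {R : Type*} [CommRing R] {p p₁ : R[X]} {h : R} {P : Finset R[X]}

/-- The polynomial `p (x + h) - p h - p₁ x`, the member of a derived family that comes from the
polynomial `p` and the shift `h`. -/
noncomputable def derivedPoly (p₁ p : R[X]) (h : R) : R[X] :=
  taylor h p - C (p.eval h) - p₁

theorem eval_derivedPoly (x : R) :
    (derivedPoly p₁ p h).eval x = p.eval (x + h) - p.eval h - p₁.eval x := by
  simp [derivedPoly, taylor_eval]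

theorem natDegree_derivedPoly_le (hle : p₁.natDegree ≤ p.natDegree) :
    (derivedPoly p₁ p h).natDegree ≤ p.natDegree := by
  refine (natDegree_sub_le _ _).trans (max_le ?_ hle)
  rw [natDegree_sub_C, natDegree_taylor]

theorem coeff_natDegree_derivedPoly (hp : 0 < p.natDegree) :
    (derivedPoly p₁ p h).coeff p.natDegree = p.leadingCoeff - p₁.coeff p.natDegree := by
  simp [derivedPoly, coeff_C_of_ne_zero hp.ne']

theorem natDegree_derivedPoly (hp : 0 < p.natDegree) (hle : p₁.natDegree ≤ p.natDegree)
    (hq : p₁.natDegree ≤ (derivedPoly p₁ p h).natDegree) :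
    (derivedPoly p₁ p h).natDegree = p.natDegree := by
  refine (natDegree_derivedPoly_le hle).antisymm (not_lt.1 fun hlt => ?_)
  have hcoeff := coeff_natDegree_derivedPoly (p₁ := p₁) (h := h) hp
  rw [coeff_eq_zero_of_natDegree_lt hlt, coeff_eq_zero_of_natDegree_lt (hq.trans_lt hlt), sub_zero,
    eq_comm, leadingCoeff_eq_zero] at hcoeff
  simp [hcoeff] at hp

open Classical in
/-- The nonzero polynomials among those that define the derived family of `P`. -/
noncomputable def derivedPolys (P : Finset R[X]) (p₁ : R[X]) (H : Finset R) : Finset R[X] :=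
  (Finset.image₂ (derivedPoly p₁) P H).erase 0

open Classical in
/-- The leading terms of the polynomials in `P`, a term `c x ^ m` being encoded as `(m, c)`. -/
noncomputable def leadingTerms (P : Finset R[X]) : Finset (ℕ × R) :=
  P.image fun p => (p.natDegree, p.leadingCoeff)

/-- The weight on which PET induction proceeds: the multiset of the degrees of the distinct leading
terms of `P`, to be compared in the Dershowitz–Manna order. -/
noncomputable def petWeight (P : Finset R[X]) : Multiset ℕ :=
  (leadingTerms P).val.map Prod.fst

theorem mem_derivedPolys {H : Finset R} {q : R[X]} :
    q ∈ derivedPolys P p₁ H ↔ q ≠ 0 ∧ ∃ p ∈ P, ∃ h ∈ H, derivedPoly p₁ p h = q := by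
  simp [derivedPolys]

theorem mem_leadingTerms {t : ℕ × R} :
    t ∈ leadingTerms P ↔ ∃ p ∈ P, (p.natDegree, p.leadingCoeff) = t := by
  simp [leadingTerms]

theorem exists_mem_leadingTerms_of_mem_derivedPolys (hP : ∀ p ∈ P, 0 < p.natDegree)
    (hmin : ∀ p ∈ P, p₁.natDegree ≤ p.natDegree) {H : Finset R} {q : R[X]}
    (hq : q ∈ derivedPolys P p₁ H) (hle : p₁.natDegree ≤ q.natDegree) :
    ∃ t ∈ leadingTerms P, t ≠ (p₁.natDegree, p₁.leadingCoeff) ∧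
      (t.1, t.2 - p₁.coeff t.1) = (q.natDegree, q.leadingCoeff) := by
  obtain ⟨hq0, p, hp, h, -, rfl⟩ := mem_derivedPolys.1 hq
  have hdeg := natDegree_derivedPoly (hP p hp) (hmin p hp) hle
  have hlead : (derivedPoly p₁ p h).leadingCoeff = p.leadingCoeff - p₁.coeff p.natDegree := by
    rw [leadingCoeff, hdeg, coeff_natDegree_derivedPoly (hP p hp)]
  refine ⟨_, mem_leadingTerms.2 ⟨p, hp, rfl⟩, fun heq => hq0 ?_, by rw [hdeg, hlead]⟩
  obtain ⟨hnat, hcoeff⟩ := Prod.mk.inj heq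
  rw [← leadingCoeff_eq_zero, hlead, hnat, hcoeff, coeff_natDegree, sub_self]

theorem filter_petWeight_derivedPolys_le (hP : ∀ p ∈ P, 0 < p.natDegree) (hp₁ : p₁ ∈ P)
    (hmin : ∀ p ∈ P, p₁.natDegree ≤ p.natDegree) (H : Finset R) :
    (petWeight (derivedPolys P p₁ H)).filter (p₁.natDegree ≤ ·) ≤
      (petWeight P).erase p₁.natDegree := by
  classical
  let t₁ : ℕ × R := (p₁.natDegree, p₁.leadingCoeff)
  let subCoeff (t : ℕ × R) : ℕ × R := (t.1, t.2 - p₁.coeff t.1)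
  have subCoeff_injective : subCoeff.Injective := by
    rintro ⟨m, c⟩ ⟨m', c'⟩ heq
    obtain ⟨rfl, hc⟩ := Prod.mk.inj heq
    exact Prod.ext rfl (sub_left_injective hc)
  have hsub : (leadingTerms (derivedPolys P p₁ H)).filter (p₁.natDegree ≤ ·.1) ⊆
      ((leadingTerms P).erase t₁).image subCoeff := by
    intro s hs
    obtain ⟨hs, hle⟩ := Finset.mem_filter.1 hs
    obtain ⟨q, hq, rfl⟩ := mem_leadingTerms.1 hs
    obtain ⟨t, ht, hne, heq⟩ := exists_mem_leadingTerms_of_mem_derivedPolys hP hmin hq hle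
    exact Finset.mem_image.2 ⟨t, Finset.mem_erase.2 ⟨hne, ht⟩, heq⟩
  calc
    _ = ((leadingTerms (derivedPolys P p₁ H)).filter (p₁.natDegree ≤ ·.1)).val.map Prod.fst :=
      Multiset.filter_map ..
    _ ≤ (((leadingTerms P).erase t₁).image subCoeff).val.map Prod.fst :=
      Multiset.map_le_map (Finset.val_le_iff.2 hsub)
    _ = ((leadingTerms P).erase t₁).val.map Prod.fst := by
      rw [Finset.image_val_of_injOn subCoeff_injective.injOn, Multiset.map_map]
      rfl
    _ = (petWeight P).erase p₁.natDegree := by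
      rw [Finset.erase_val, Multiset.map_erase_of_mem _ _ (mem_leadingTerms.2 ⟨p₁, hp₁, rfl⟩)]
      rfl

theorem isDershowitzMannaLT_petWeight_derivedPolys (hP : ∀ p ∈ P, 0 < p.natDegree) (hp₁ : p₁ ∈ P)
    (hmin : ∀ p ∈ P, p₁.natDegree ≤ p.natDegree) (H : Finset R) :
    (petWeight (derivedPolys P p₁ H)).IsDershowitzMannaLT (petWeight P) :=
  isDershowitzMannaLT_of_filter_le_erase
    (Multiset.mem_map.2 ⟨_, mem_leadingTerms.2 ⟨p₁, hp₁, rfl⟩, rfl⟩)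
    (filter_petWeight_derivedPolys_le hP hp₁ hmin H)

/-- The polynomial functions of the members of `P`, the maps to which the van der Waerden property
applies. -/
def evalFamily (P : Finset R[X]) : Set (R → R) :=
  (fun p x => p.eval x) '' (P : Set R[X])

theorem derivedFamily_evalFamily_subset (p₁ : R[X]) (H : Finset R) :
    derivedFamily (evalFamily P) (fun x => p₁.eval x) H ⊆
      insert 0 (evalFamily (derivedPolys P p₁ H)) := by
  rintro _ ⟨_, ⟨p, hp, rfl⟩, h, hh, rfl⟩
  simp only [← eval_derivedPoly]
  by_cases hq : derivedPoly p₁ p h = 0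
  · left
    ext x
    simp [hq]
  · exact .inr ⟨_, mem_derivedPolys.2 ⟨hq, p, hp, h, hh, rfl⟩, rfl⟩

theorem isVdWFamily_evalFamily_of_ne_zero (S : AddSubsemigroup R) [Nonempty S] (P : Finset R[X])
    (hne : ∀ p ∈ P, p ≠ 0) (hP0 : ∀ p ∈ P, p.eval 0 = 0) : IsVdWFamily S (evalFamily P) := by
  induction P using (InvImage.wf petWeight Multiset.wellFounded_isDershowitzMannaLT).induction with
  | _ P ih
  obtain rfl | hPne := P.eq_empty_or_nonempty
  · simpa [evalFamily] using isVdWFamily_empty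
  obtain ⟨p₁, hp₁, hmin⟩ := P.exists_min_image natDegree hPne
  have hpos (p) (hp : p ∈ P) : 0 < p.natDegree := by
    refine Nat.pos_of_ne_zero fun hdeg => hne p hp ?_
    rw [eq_C_of_natDegree_eq_zero hdeg, coeff_zero_eq_eval_zero, hP0 p hp, C_0]
  refine .of_derivedFamily (P.finite_toSet.image _) (by rintro _ ⟨p, hp, rfl⟩; exact hP0 p hp)
    (p₁ := fun x => p₁.eval x) fun H hH => ?_
  lift H to Finset R using hH
  refine IsVdWFamily.mono (ih (derivedPolys P p₁ H) ?_ ?_ ?_).insert_zero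
    (derivedFamily_evalFamily_subset p₁ H)
  · exact isDershowitzMannaLT_petWeight_derivedPolys hpos hp₁ hmin H
  · exact fun q hq => (mem_derivedPolys.1 hq).1
  · intro q hq
    obtain ⟨-, p, -, h, -, rfl⟩ := mem_derivedPolys.1 hq
    simp [eval_derivedPoly, hP0 p₁ hp₁]

theorem isVdWFamily_evalFamily (S : AddSubsemigroup R) [Nonempty S] (P : Finset R[X])
    (hP0 : ∀ p ∈ P, p.eval 0 = 0) : IsVdWFamily S (evalFamily P) := by
  classical
  have herase : IsVdWFamily S (evalFamily (P.erase 0)) :=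
    isVdWFamily_evalFamily_of_ne_zero S _ (fun p hp => Finset.ne_of_mem_erase hp)
      fun p hp => hP0 p (Finset.mem_of_mem_erase hp)
  refine herase.insert_zero.mono ?_
  rintro _ ⟨p, hp, rfl⟩
  obtain rfl | hne := eq_or_ne p 0
  · exact .inl (funext fun x => eval_zero)
  · exact .inr ⟨p, Finset.mem_erase.2 ⟨hne, hp⟩, rfl⟩

end PETInduction

theorem vanDerCube_exists_general {κ : Type*} [Finite κ] (P : Finset ℤ[X])
    (hP0 : ∀ p ∈ P, p.eval 0 = 0) :
    ∀ᶠ n : ℕ in atTop, ∀ f : ℤ → κ, ∃ a ∈ Set.Icc (1 : ℤ) n, ∃ d > 0,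
      ∀ p ∈ P, a + p.eval d ∈ Set.Icc (1 : ℤ) n ∧ f (a + p.eval d) = f a := by
  let S : AddSubsemigroup ℤ := ⟨Set.Ioi 0, fun hx hy => Int.add_pos hx hy⟩
  have : Nonempty S := ⟨1, Int.one_pos⟩
  obtain ⟨A, E, hAE⟩ := (isVdWFamily_evalFamily S P hP0).exists_of_finite κ
  let T : Finset ℤ := A ∪ (A + Finset.image₂ (fun p (d : S) => p.eval (d : ℤ)) P E)
  obtain ⟨K, hK⟩ : ∃ K : ℕ, ∀ t ∈ T, |t| ≤ K :=
    ⟨T.sup Int.natAbs, fun t ht => by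
      rw [Int.abs_eq_natAbs]
      exact_mod_cast Finset.le_sup (f := Int.natAbs) ht⟩
  have mem_Icc {n : ℕ} (hn : 2 * K + 1 ≤ n) {t : ℤ} (ht : t ∈ T) :
      t + (K + 1) ∈ Set.Icc (1 : ℤ) n := by
    have := abs_le.1 (hK t ht)
    constructor <;> omega
  filter_upwards [eventually_ge_atTop (2 * K + 1)] with n hn f
  obtain ⟨a, ha, d, hd, had⟩ := hAE fun x => f (x + (K + 1))
  refine ⟨a + (K + 1), mem_Icc hn (Finset.mem_union_left _ ha), d, d.2, fun p hp => ?_⟩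
  rw [add_right_comm]
  exact ⟨mem_Icc hn (Finset.mem_union_right _
    (Finset.add_mem_add ha (Finset.mem_image₂_of_mem hp hd))), had _ ⟨p, hp, rfl⟩⟩

/-- Corollary 4.2 (van der Cube numbers): for every positive `c` there is an `n > c`
such that every `c`-coloring of `[n]` contains two same-colored integers a
perfect cube apart. -/
theorem vanDerCube_exists (c : ℕ) (hc : 1 ≤ c) :
    ∃ n : ℕ, c < n ∧ ∀ f : ℕ → Fin c,
      ∃ a d : ℕ, 1 ≤ a ∧ 1 ≤ d ∧ a + d ^ 3 ≤ n ∧ f a = f (a + d ^ 3) := by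
  obtain ⟨n, hcn, hn⟩ :=
    ((eventually_gt_atTop c).and (vanDerCube_exists_general (κ := Fin c) {X ^ 3} (by simp))).exists
  refine ⟨n, hcn, fun f => ?_⟩
  obtain ⟨a, ha, d, hd, had⟩ := hn fun x => f x.toNat
  lift a to ℕ using zero_le_one.trans ha.1
  lift d to ℕ using hd.le
  obtain ⟨hle, heq⟩ := had _ (Finset.mem_singleton_self _)
  simp only [eval_pow, eval_X] at hle heq
  exact ⟨a, d, mod_cast ha.1, mod_cast hd, mod_cast hle.2, mod_cast heq.symm⟩
end

section
/- For every 3-coloring f of [68] = {1,...,68} there exist two integers of the same color that are a perfect square apart; that is, there exist a ∈ [68] and a positive integer d with a + d² ≤ 68 and f(a) = f(a + d²). -/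
/-!
Let `x² + y² = z²` be a Pythagorean triple with `x < y`. In a 3-coloring with no two numbers of the
same color a square apart, `a`, `a + x²`, `a + z²` have pairwise distinct colors, and so do `a`,
`a + y²`, `a + z²`. Hence `a + x²` and `a + y²` share a color, that is, the coloring is locally
periodic with period `t = y² - x²`. Applying the period `t` times moves by the square `t²`, a
contradiction once the interval has `2x² + t² + 1` elements; the triple `(3, 4, 5)` gives `68`.
-/

variable {α : Type*}

/-- A coloring avoids squares on `{1, …, n}` if no two elements of this interval that are a positive
square apart have the same color. Colorings are defined on all of `ℕ`, but only their values on
`{1, …, n}` matter. -/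
def AvoidsSquares (n : ℕ) (f : ℕ → α) : Prop :=
  ∀ ⦃a d : ℕ⦄, 1 ≤ a → 1 ≤ d → a + d ^ 2 ≤ n → f a ≠ f (a + d ^ 2)

theorem eq_of_ne_of_card_le_three [Fintype α] (hα : Fintype.card α ≤ 3) {p q r s : α}
    (hpq : p ≠ q) (hpr : p ≠ r) (hps : p ≠ s) (hqs : q ≠ s) (hrs : r ≠ s) : q = r := by
  classical
  by_contra hqr
  have card_eq : ({p, q, r, s} : Finset α).card = 4 := by
    simp [hpq, hpr, hps, hqr, hqs, hrs]
  have card_le := Finset.card_le_univ ({p, q, r, s} : Finset α)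
  omega

namespace AvoidsSquares

variable {n x y z t : ℕ} {f : ℕ → α}

theorem apply_add_sq_eq_apply_add_sq [Fintype α] (hf : AvoidsSquares n f)
    (hα : Fintype.card α ≤ 3) (hx : 1 ≤ x) (hy : 1 ≤ y) (hxyz : x ^ 2 + y ^ 2 = z ^ 2)
    {a : ℕ} (ha : 1 ≤ a) (han : a + z ^ 2 ≤ n) : f (a + x ^ 2) = f (a + y ^ 2) := by
  have hx2 : 0 < x ^ 2 := Nat.pow_pos hx
  have hz : 1 ≤ z := Nat.pos_of_ne_zero (by rintro rfl; omega)
  have hxz : a + x ^ 2 + y ^ 2 = a + z ^ 2 := by omega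
  have hyz : a + y ^ 2 + x ^ 2 = a + z ^ 2 := by omega
  exact eq_of_ne_of_card_le_three hα
    (hf ha hx (by omega)) (hf ha hy (by omega)) (hf ha hz han)
    (hxz ▸ hf (by omega) hy (by omega)) (hyz ▸ hf (by omega) hx (by omega))

theorem apply_add_mul_eq [Fintype α] (hf : AvoidsSquares n f) (hα : Fintype.card α ≤ 3)
    (hx : 1 ≤ x) (hxy : x ^ 2 + t = y ^ 2) (hxyz : x ^ 2 + y ^ 2 = z ^ 2)
    {b : ℕ} (hb : x ^ 2 < b) {k : ℕ} (hbn : b + k * t + x ^ 2 ≤ n) : f (b + k * t) = f b := by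
  have hx2 : 0 < x ^ 2 := Nat.pow_pos hx
  have hy : 1 ≤ y := Nat.pos_of_ne_zero (by rintro rfl; omega)
  induction k with
  | zero => simp
  | succ k ih =>
    rw [add_one_mul] at hbn ⊢
    obtain ⟨a, ha⟩ : ∃ a, a + x ^ 2 = b + k * t := ⟨b + k * t - x ^ 2, by omega⟩
    calc f (b + (k * t + t))
        = f (a + y ^ 2) := by congr 1; omega
      _ = f (a + x ^ 2) :=
        (hf.apply_add_sq_eq_apply_add_sq hα hx hy hxyz (by omega) (by omega)).symm
      _ = f (b + k * t) := by rw [ha]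
      _ = f b := ih (by omega)

end AvoidsSquares

theorem R3VS_le_68_general [Fintype α] (hα : Fintype.card α ≤ 3) {x y z t : ℕ}
    (hx : 1 ≤ x) (ht : 1 ≤ t) (hxy : x ^ 2 + t = y ^ 2) (hxyz : x ^ 2 + y ^ 2 = z ^ 2)
    (f : ℕ → α) :
    ∃ a d : ℕ, 1 ≤ a ∧ 1 ≤ d ∧ a + d ^ 2 ≤ 2 * x ^ 2 + t ^ 2 + 1 ∧ f a = f (a + d ^ 2) := by
  by_contra! hf
  have avoids : AvoidsSquares (2 * x ^ 2 + t ^ 2 + 1) f := hf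
  have period : f (x ^ 2 + 1 + t ^ 2) = f (x ^ 2 + 1) := by
    rw [sq t]
    exact avoids.apply_add_mul_eq hα hx hxy hxyz (Nat.lt_succ_self _) (by rw [← sq]; omega)
  exact avoids (by omega) ht (by omega) period.symm

/-- Theorem 4.3: every 3-coloring of `[68]` contains two same-colored integers a
perfect square apart, i.e. `R₃(VS) ≤ 68`. -/
theorem R3VS_le_68 (f : ℕ → Fin 3) :
    ∃ a d : ℕ, 1 ≤ a ∧ 1 ≤ d ∧ a + d ^ 2 ≤ 68 ∧ f a = f (a + d ^ 2) :=
  R3VS_le_68_general (x := 3) (y := 4) (z := 5) (t := 7) (by simp) (by simp) (by simp)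
    (by simp) (by simp) f
end

section
/- For every 3-coloring f of [29] = {1,...,29} there exist two integers of the same color that are a perfect square apart, and there exists a 3-coloring of [28] = {1,...,28} with no two same-colored integers a perfect square apart; that is, R_3(VS) = 29. -/
/-!
If `p ^ 2 + q ^ 2 = r ^ 2`, then `a + p ^ 2` and `a + q ^ 2` are both a square apart from `a` and
from `a + r ^ 2`, which are themselves a square apart. So if a 3-coloring `f` has no two integers
of the same color a square apart, then `a + p ^ 2` and `a + q ^ 2` share the third color.
For the triple `(3, 4, 5)` this reads `f b = f (b + 7)` whenever `10 ≤ b` and `b + 16` is colored.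
If 29 is colored, then `f 10 = f 17`, `f 12 = f 19` and `f 13 = f 20`, while the pairs `(10, 11)`,
`(11, 12)`, `(12, 13)`, `(10, 19)`, `(13, 17)` and `(11, 20)` are a square apart.
Hence 10, 11, 12, 13 would need four colors.
-/

lemma eq_or_eq_or_eq_of_card_le_three {α : Type*} [Fintype α] (hα : Fintype.card α ≤ 3)
    {x y z : α} (hxy : x ≠ y) (hxz : x ≠ z) (hyz : y ≠ z) (w : α) :
    w = x ∨ w = y ∨ w = z := by
  by_contra! ⟨hwx, hwy, hwz⟩
  refine hα.not_gt (Finset.three_lt_card_iff.mpr ⟨w, x, y, z, ?_⟩)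
  simp [*]

/-- The coloring `f`, restricted to `{1, ..., n}`, has no two integers of the same color that are
a square apart. It is defined on all of `ℕ`; the values outside `{1, ..., n}` are irrelevant. -/
def AvoidsSquareDifferences {α : Type*} (f : ℕ → α) (n : ℕ) : Prop :=
  ∀ a d : ℕ, 1 ≤ a → 1 ≤ d → a + d ^ 2 ≤ n → f a ≠ f (a + d ^ 2)

namespace AvoidsSquareDifferences

variable {α : Type*} {f : ℕ → α} {n : ℕ}

lemma iff_forall_mem_Icc :
    AvoidsSquareDifferences f n ↔
      ∀ a ∈ Finset.Icc 1 n, ∀ d ∈ Finset.Icc 1 n.sqrt, a + d ^ 2 ≤ n → f a ≠ f (a + d ^ 2) := by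
  simp only [AvoidsSquareDifferences, Finset.mem_Icc, Nat.le_sqrt']
  constructor
  · exact fun hf a ha d hd hn => hf a d ha.1 hd.1 hn
  · exact fun hf a d ha hd hn => hf a ⟨ha, by lia⟩ d ⟨hd, by lia⟩ hn

instance [DecidableEq α] : Decidable (AvoidsSquareDifferences f n) :=
  decidable_of_iff' _ iff_forall_mem_Icc

lemma apply_ne (hf : AvoidsSquareDifferences f n) {a b : ℕ} (d : ℕ) (ha : 1 ≤ a) (hd : 1 ≤ d)
    (hb : b ≤ n) (hab : a + d ^ 2 = b) : f a ≠ f b := by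
  subst hab
  exact hf a d ha hd hb

variable [Fintype α]

lemma apply_add_sq_eq_of_sq_add_sq (hf : AvoidsSquareDifferences f n)
    (hα : Fintype.card α ≤ 3) {a p q r : ℕ} (ha : 1 ≤ a) (hp : 1 ≤ p) (hq : 1 ≤ q)
    (hpqr : p ^ 2 + q ^ 2 = r ^ 2) (hn : a + r ^ 2 ≤ n) :
    f (a + p ^ 2) = f (a + q ^ 2) := by
  have hr : 1 ≤ r := by nlinarith
  have start_ne_r : f a ≠ f (a + r ^ 2) := hf a r ha hr hn
  have start_ne_p : f a ≠ f (a + p ^ 2) := hf a p ha hp (by lia)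
  have start_ne_q : f a ≠ f (a + q ^ 2) := hf a q ha hq (by lia)
  have p_ne_r : f (a + p ^ 2) ≠ f (a + r ^ 2) := hf.apply_ne q (by lia) hq hn (by lia)
  have q_ne_r : f (a + q ^ 2) ≠ f (a + r ^ 2) := hf.apply_ne p (by lia) hp hn (by lia)
  rcases eq_or_eq_or_eq_of_card_le_three hα start_ne_r start_ne_q q_ne_r.symm
    (f (a + p ^ 2)) with h | h | h
  · exact absurd h.symm start_ne_p
  · exact absurd h p_ne_r
  · exact h

lemma apply_add_seven (hf : AvoidsSquareDifferences f n) (hα : Fintype.card α ≤ 3) {b : ℕ}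
    (hb : 10 ≤ b) (hn : b + 16 ≤ n) : f (b + 7) = f b := by
  obtain ⟨a, rfl⟩ := Nat.exists_eq_add_of_le' (show 9 ≤ b by lia)
  exact hf.apply_add_sq_eq_of_sq_add_sq hα (p := 4) (q := 3) (r := 5)
    (by lia) (by simp) (by simp) (by simp) (by lia)

theorem lt_twenty_nine (hf : AvoidsSquareDifferences f n) (hα : Fintype.card α ≤ 3) :
    n < 29 := by
  by_contra! hn
  have ne_10_11 : f 10 ≠ f 11 := hf.apply_ne 1 (by simp) le_rfl (by lia) rfl
  have ne_11_12 : f 11 ≠ f 12 := hf.apply_ne 1 (by simp) le_rfl (by lia) rfl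
  have ne_12_13 : f 12 ≠ f 13 := hf.apply_ne 1 (by simp) le_rfl (by lia) rfl
  have ne_10_12 : f 10 ≠ f 12 := by
    rw [← hf.apply_add_seven hα (b := 12) (by simp) (by lia)]
    exact hf.apply_ne 3 (by simp) (by simp) (by lia) rfl
  have ne_13_10 : f 13 ≠ f 10 := by
    rw [← hf.apply_add_seven hα (b := 10) (by simp) (by lia)]
    exact hf.apply_ne 2 (by simp) (by simp) (by lia) rfl
  have ne_11_13 : f 11 ≠ f 13 := by
    rw [← hf.apply_add_seven hα (b := 13) (by simp) (by lia)]
    exact hf.apply_ne 3 (by simp) (by simp) (by lia) rfl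
  rcases eq_or_eq_or_eq_of_card_le_three hα ne_10_11 ne_10_12 ne_11_12 (f 13) with h | h | h
  · exact ne_13_10 h
  · exact ne_11_13 h.symm
  · exact ne_12_13 h.symm

end AvoidsSquareDifferences

/-- A 3-coloring of `{1, ..., 28}` witnessing the lower bound `28 < R₃(VS)`: the list starts with
the color of `1`, and the integers outside `{1, ..., 28}` get an irrelevant color. The coloring is
invariant under `k ↦ 29 - k` combined with the exchange of the colors `1` and `2`. -/
def extremalColoring (k : ℕ) : Fin 3 :=
  [0, 1, 2, 1, 2, 0, 1, 0, 1, 2, 0, 1, 0, 1,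
    2, 0, 2, 0, 1, 2, 0, 2, 0, 1, 2, 1, 2, 0].getD (k - 1) 0

lemma avoidsSquareDifferences_extremalColoring : AvoidsSquareDifferences extremalColoring 28 := by
  decide +kernel

/-- `R₃(VS) = 29`: every 3-coloring of `[29]` has two same-colored integers a
perfect square apart, and some 3-coloring of `[28]` has none. -/
theorem R3VS_eq_29 :
    (∀ f : ℕ → Fin 3,
      ∃ a d : ℕ, 1 ≤ a ∧ 1 ≤ d ∧ a + d ^ 2 ≤ 29 ∧ f a = f (a + d ^ 2)) ∧
    (∃ f : ℕ → Fin 3,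
      ¬ ∃ a d : ℕ, 1 ≤ a ∧ 1 ≤ d ∧ a + d ^ 2 ≤ 28 ∧ f a = f (a + d ^ 2)) := by
  constructor
  · intro f
    by_contra! hf
    have h : 29 < 29 := AvoidsSquareDifferences.lt_twenty_nine (f := f) hf (by simp)
    exact h.false
  · refine ⟨extremalColoring, ?_⟩
    push Not
    exact avoidsSquareDifferences_extremalColoring
end

section
/- For every 4-coloring f of [58] = {1,...,58} there exist two integers of the same color that are a perfect square apart; that is, there exist a ∈ [58] and a positive integer d with a + d² ≤ 58 and f(a) = f(a + d²). -/
/-!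
Suppose that `[58]` had a 4-coloring in which no two integers of the same color are a square apart.
Color the integers one at a time. After each step record, for every color already in use, the
integers barred from it by a neighbor of that color. An integer barred from all four colors is a
dead end. Unused colors are interchangeable, so only one of them has to be tried at each step. Every
branch of this backtracking search meets a dead end. Sets of integers are bit masks, which makes
the search (about twelve thousand nodes) small enough to be evaluated by the kernel.
-/

namespace VanDerSquare

/-- The intersection of a list of bit masks, with the junk value `0` for the empty list. -/
def commonBits : List ℕ → ℕ
  | [] => 0
  | b :: l => l.foldr (· &&& ·) b

theorem testBit_of_testBit_foldr_land {x w : ℕ} {l : List ℕ}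
    (h : (l.foldr (· &&& ·) x).testBit w = true) :
    x.testBit w = true ∧ ∀ b ∈ l, b.testBit w = true := by
  induction l with
  | nil => simpa using h
  | cons b l ih =>
    simp only [List.foldr_cons, Nat.testBit_and, Bool.and_eq_true] at h
    exact ⟨(ih h.2).1, List.forall_mem_cons.2 ⟨h.1, (ih h.2).2⟩⟩

theorem testBit_of_testBit_commonBits {w : ℕ} {l : List ℕ}
    (h : (commonBits l).testBit w = true) : ∀ b ∈ l, b.testBit w = true := by
  cases l with
  | nil => simp
  | cons b l => exact List.forall_mem_cons.2 (testBit_of_testBit_foldr_land h)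

/-- Put the vertex `v`, whose neighbors form the mask `m`, into each of the color classes in turn,
where a class is given by the mask of the vertices barred from it. The test asks that `p` hold for
the new list of masks, for every class from which `v` is not barred. -/
def everyPlacement (v m : ℕ) (p : List ℕ → Bool) : List ℕ → Bool
  | [] => true
  | b :: l => (b.testBit v || p ((b ||| m) :: l)) && everyPlacement v m (fun l' => p (b :: l')) l

/-- Backtracking search for a proper coloring of the graph with neighbor masks `nbr`. The arguments
are the vertices still to be branched on, the number of unused colors, and the masks of the vertices
barred from each used color. The value `true` certifies that no coloring extends this state. -/
def refutes (nbr : ℕ → ℕ) : List ℕ → ℕ → List ℕ → Bool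
  | [], _, _ => false
  | v :: vs, 0, l => commonBits l != 0 || everyPlacement v (nbr v) (refutes nbr vs 0) l
  | v :: vs, n + 1, l =>
    everyPlacement v (nbr v) (refutes nbr vs (n + 1)) l && refutes nbr vs n (nbr v :: l)

theorem apply_set_of_everyPlacement {v m : ℕ} {p : List ℕ → Bool} {l : List ℕ}
    (h : everyPlacement v m p l = true) (i : ℕ) (hi : i < l.length)
    (hv : l[i].testBit v = false) : p (l.set i (l[i] ||| m)) = true := by
  induction l generalizing p i with
  | nil => simp at hi
  | cons b l ih =>
    simp only [everyPlacement, Bool.and_eq_true, Bool.or_eq_true] at h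
    cases i with
    | zero => exact h.1.resolve_left (by simpa using hv)
    | succ i => exact ih h.2 i (by simpa using hi) hv

theorem everyPlacement_of_refutes {nbr : ℕ → ℕ} {v : ℕ} {vs : List ℕ} {n : ℕ} {l : List ℕ}
    (h : refutes nbr (v :: vs) n l = true) (hl : n = 0 → commonBits l = 0) :
    everyPlacement v (nbr v) (refutes nbr vs n) l = true := by
  cases n with
  | zero => simpa [refutes, hl rfl] using h
  | succ n =>
    rw [refutes, Bool.and_eq_true] at h
    exact h.1

section Coloring

variable {α : Type*}

/-- The coloring `C` gives no vertex a color from which it is barred, `barred a` being the mask of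
the vertices barred from the color `a`. -/
def Respects (C : ℕ → α) (barred : α → ℕ) : Prop :=
  ∀ w, (barred (C w)).testBit w = false

theorem Respects.commonBits_map_eq_zero {C : ℕ → α} {barred : α → ℕ} (hC : Respects C barred)
    {used : List α} (hused : ∀ a, a ∈ used) : commonBits (used.map barred) = 0 := by
  by_contra hne
  obtain ⟨w, hw⟩ := Nat.exists_testBit_of_ne_zero hne
  have hbarred := testBit_of_testBit_commonBits hw _ (List.mem_map_of_mem (hused (C w)))
  exact Bool.false_ne_true ((hC w).symm.trans hbarred)

theorem length_lt_card_of_notMem [Fintype α] {used : List α} (hused : used.Nodup) {a : α}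
    (ha : a ∉ used) : used.length < Fintype.card α :=
  (hused.cons ha).length_le_card

/-- The masks of barred vertices after the color `a` is given to a vertex with neighbor mask `m`. -/
def bar [DecidableEq α] (barred : α → ℕ) (a : α) (m : ℕ) : α → ℕ :=
  Function.update barred a (barred a ||| m)

theorem Respects.bar_color [DecidableEq α] {G : SimpleGraph ℕ} {C : G.Coloring α}
    {barred : α → ℕ} (hC : Respects C barred) {v m : ℕ} (hm : ∀ w, m.testBit w = true → G.Adj v w) :
    Respects C (bar barred (C v) m) := by
  intro w
  by_cases hcolor : C w = C v
  · have hw : m.testBit w = false :=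
      Bool.eq_false_iff.2 fun hmw => C.valid (hm w hmw) hcolor.symm
    simp [bar, hcolor, hw, ← hcolor ▸ hC w]
  · simpa [bar, hcolor] using hC w

theorem apply_map_bar_of_everyPlacement [DecidableEq α] {v m : ℕ} {p : List ℕ → Bool}
    {barred : α → ℕ} {used : List α} (h : everyPlacement v m p (used.map barred) = true)
    (hused : used.Nodup) {a : α} (ha : a ∈ used) (hv : (barred a).testBit v = false) :
    p (used.map (bar barred a m)) = true := by
  have hi : used.idxOf a < (used.map barred).length := by
    simpa using List.idxOf_lt_length_of_mem ha
  have hget : (used.map barred)[used.idxOf a] = barred a := by simp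
  rw [bar, hused.map_update, if_pos ha, ← hget]
  exact apply_set_of_everyPlacement h _ hi (hget ▸ hv)

theorem map_bar_cons_of_notMem [DecidableEq α] {barred : α → ℕ} {used : List α} {a : α}
    (ha : a ∉ used) (hzero : barred a = 0) (m : ℕ) :
    (a :: used).map (bar barred a m) = m :: used.map barred := by
  have htail : used.map (bar barred a m) = used.map barred :=
    List.map_congr_left fun b hb => Function.update_of_ne (ne_of_mem_of_not_mem hb ha) _ _
  rw [List.map_cons, htail]
  simp [bar, hzero]

theorem not_refutes_of_respects [Fintype α] {G : SimpleGraph ℕ} (C : G.Coloring α)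
    {nbr : ℕ → ℕ} {vs : List ℕ} (hnbr : ∀ v ∈ vs, ∀ w, (nbr v).testBit w = true → G.Adj v w)
    {n : ℕ} {used : List α} (hused : used.Nodup) (hcard : Fintype.card α ≤ n + used.length)
    {barred : α → ℕ} (hzero : ∀ a ∉ used, barred a = 0) (hC : Respects C barred) :
    ¬ refutes nbr vs n (used.map barred) = true := by
  classical
  intro h
  induction vs generalizing n used barred with
  | nil => simp [refutes] at h
  | cons v vs ih =>
    obtain ⟨hv, hvs⟩ := List.forall_mem_cons.1 hnbr
    have hC' : Respects C (bar barred (C v) (nbr v)) := hC.bar_color hv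
    have hzero' : ∀ a ∉ used, a ≠ C v → bar barred (C v) (nbr v) a = 0 := fun a ha hne =>
      (Function.update_of_ne hne _ _).trans (hzero a ha)
    by_cases hmem : C v ∈ used
    · have hplace : everyPlacement v (nbr v) (refutes nbr vs n) (used.map barred) = true := by
        refine everyPlacement_of_refutes h fun hn => hC.commonBits_map_eq_zero fun a => ?_
        by_contra ha
        have hlt := length_lt_card_of_notMem hused ha
        omega
      exact ih hvs hused hcard (fun a ha => hzero' a ha (ne_of_mem_of_not_mem hmem ha).symm) hC'
        (apply_map_bar_of_everyPlacement hplace hused hmem (hC v))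
    · have hlt := length_lt_card_of_notMem hused hmem
      obtain ⟨k, rfl⟩ : ∃ k, n = k + 1 := Nat.exists_eq_add_one.2 (by omega)
      rw [refutes, Bool.and_eq_true, ← map_bar_cons_of_notMem hmem (hzero _ hmem)] at h
      refine ih hvs (hused.cons hmem) (by simp; omega) (fun a ha => ?_) hC' h.2
      exact hzero' a (List.not_mem_of_not_mem_cons ha) (List.ne_of_not_mem_cons ha)

end Coloring

theorem not_colorable_of_refutes {G : SimpleGraph ℕ} {nbr : ℕ → ℕ} {vs : List ℕ}
    (hnbr : ∀ v ∈ vs, ∀ w, (nbr v).testBit w = true → G.Adj v w) {c : ℕ}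
    (h : refutes nbr vs c [] = true) : ¬ G.Colorable c := by
  rintro ⟨C⟩
  exact not_refutes_of_respects C hnbr (used := []) (barred := fun _ => 0) List.nodup_nil
    (by simp) (fun _ _ => rfl) (fun w => Nat.zero_testBit w) h

/-- The graph on `ℕ` that joins two integers below `n` when they are a square apart. The vertex `i`
stands for the element `i + 1` of `[n]`. -/
def squareGraph (n : ℕ) : SimpleGraph ℕ :=
  SimpleGraph.fromRel fun a b => b < n ∧ ∃ d, a + d ^ 2 = b

/-- The mask of the integers below `n` at distance `d ^ 2` from `v` for some `1 ≤ d ≤ k`. It is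
meant for `v < n`. -/
def squareNeighborMask (n : ℕ) : ℕ → ℕ → ℕ
  | 0, _ => 0
  | k + 1, v =>
    squareNeighborMask n k v ||| (2 ^ (v + (k + 1) ^ 2) % 2 ^ n ||| 2 ^ v >>> (k + 1) ^ 2)

theorem squareGraph_adj_of_testBit {n k v w : ℕ} (hv : v < n)
    (h : (squareNeighborMask n k v).testBit w = true) : (squareGraph n).Adj v w := by
  induction k with
  | zero => simp [squareNeighborMask] at h
  | succ k ih =>
    have hd : 0 < (k + 1) ^ 2 := by positivity
    simp only [squareNeighborMask, Nat.testBit_or, Bool.or_eq_true, Nat.testBit_mod_two_pow,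
      Nat.testBit_shiftRight, Nat.testBit_two_pow, Bool.and_eq_true, decide_eq_true_eq] at h
    obtain h | ⟨hw, h⟩ | h := h
    · exact ih h
    · exact (SimpleGraph.fromRel_adj _ _ _).2 ⟨by omega, .inl ⟨hw, k + 1, h⟩⟩
    · exact (SimpleGraph.fromRel_adj _ _ _).2 ⟨by omega, .inr ⟨hv, k + 1, by omega⟩⟩

theorem squareGraph_colorable {n c : ℕ} (f : ℕ → Fin c)
    (hf : ∀ a d, 1 ≤ d → a + d ^ 2 < n → f a ≠ f (a + d ^ 2)) : (squareGraph n).Colorable c := by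
  have hne : ∀ {a b}, a ≠ b → (b < n ∧ ∃ d, a + d ^ 2 = b) → f a ≠ f b := by
    rintro a _ hab ⟨hb, d, rfl⟩
    exact hf a d (Nat.one_le_iff_ne_zero.2 fun hd => hab (by simp [hd])) hb
  refine ⟨.mk f fun {a b} hadj => ?_⟩
  obtain ⟨hab, h | h⟩ := (SimpleGraph.fromRel_adj _ _ _).1 hadj
  · exact hne hab h
  · exact (hne hab.symm h).symm

/-- The branching order for `squareGraph 58`, found by simulated annealing on the size of the search
tree. Soundness does not depend on it. -/
def branchingOrder : List ℕ :=
  [16, 32, 41, 33, 25, 24, 49, 36, 20, 29, 4, 17, 57, 53, 12, 37, 44, 19, 3, 48, 9, 34, 43, 27, 35,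
    1, 26, 14, 23, 46, 30, 56, 47, 22, 6, 39, 11, 21, 40]

theorem lt_of_mem_branchingOrder : ∀ v ∈ branchingOrder, v < 58 := by
  decide

theorem refutes_squareGraph : refutes (squareNeighborMask 58 7) branchingOrder 4 [] = true := by
  decide +kernel

theorem not_colorable_squareGraph : ¬ (squareGraph 58).Colorable 4 :=
  not_colorable_of_refutes
    (fun v hv _ => squareGraph_adj_of_testBit (lt_of_mem_branchingOrder v hv)) refutes_squareGraph

end VanDerSquare

/-- Upper-bound half of `R₄(VS) = 58`: every 4-coloring of `[58]` contains two
same-colored integers a perfect square apart. -/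
theorem R4VS_upper (f : ℕ → Fin 4) :
    ∃ a d : ℕ, 1 ≤ a ∧ 1 ≤ d ∧ a + d ^ 2 ≤ 58 ∧ f a = f (a + d ^ 2) := by
  by_contra! hne
  refine VanDerSquare.not_colorable_squareGraph
    (VanDerSquare.squareGraph_colorable (fun i => f (i + 1)) fun a d hd had => ?_)
  have hshift : a + d ^ 2 + 1 = a + 1 + d ^ 2 := by omega
  rw [hshift]
  exact hne (a + 1) d (by omega) hd (by omega)
end

section
/- There exists a 5-coloring f of [180] = {1,...,180} with no two integers of the same color a perfect square apart; that is, there are no a ∈ [180] and positive integer d with a + d² ≤ 180 and f(a) = f(a + d²). Consequently R_5(VS) > 180. -/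
/-!
Modulo the prime 13 the nonzero squares define the Paley graph on 13 vertices, which is
5-colorable. Reducing integers modulo 13 therefore gives a coloring of `ℕ` whose only same-colored
pairs a square `d ^ 2` apart have `13 ∣ d`. In `[180]` these are the eleven pairs `{a, a + 13 ^ 2}`
with `a ≤ 11`. Recoloring one member of each pair, together with eight further integers to repair
the conflicts this creates, leaves no bad pair, and only pairs meeting the nineteen recolored
integers need to be inspected.
-/

variable {α R : Type*}

/-- A coloring of `[n] = {1, …, n}` (given on all of `ℕ`) with no two same-colored elements a
positive square apart. The van der
Square number `R_c(VS)` is the least `n` for which no `c`-coloring has this property. -/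
def IsSquareAvoiding (n : ℕ) (f : ℕ → α) : Prop :=
  ∀ a d : ℕ, 1 ≤ a → 1 ≤ d → a + d ^ 2 ≤ n → f a ≠ f (a + d ^ 2)

/-- A proper coloring of the Cayley graph of `R` whose connection set is the squares of nonzero
elements; over a finite field with `q ≡ 1 (mod 4)` elements this is the Paley graph. -/
def IsPaleyColoring [Semiring R] (c : R → α) : Prop :=
  ∀ x d : R, d ≠ 0 → c x ≠ c (x + d ^ 2)

namespace IsPaleyColoring

variable [Semiring R] {c : R → α}

theorem natCast_ne (hc : IsPaleyColoring c) (a : ℕ) {d : ℕ} (hd : (d : R) ≠ 0) :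
    c a ≠ c (a + d ^ 2 : ℕ) := by
  simpa only [Nat.cast_add, Nat.cast_pow] using hc a d hd

theorem isSquareAvoiding_piecewise (hc : IsPaleyColoring c) {n : ℕ} {s : Finset ℕ} {g : ℕ → α}
    (cover : ∀ d ∈ Finset.Icc 1 n.sqrt, (d : R) = 0 →
      ∀ a ∈ Finset.Icc 1 (n - d ^ 2), a ∈ s ∨ a + d ^ 2 ∈ s)
    (ne_above : ∀ a ∈ s, ∀ d ∈ Finset.Icc 1 n.sqrt, a + d ^ 2 ≤ n →
      s.piecewise g (fun k ↦ c k) a ≠ s.piecewise g (fun k ↦ c k) (a + d ^ 2))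
    (ne_below : ∀ b ∈ s, ∀ d ∈ Finset.Icc 1 n.sqrt, d ^ 2 < b →
      s.piecewise g (fun k ↦ c k) (b - d ^ 2) ≠ s.piecewise g (fun k ↦ c k) b) :
    IsSquareAvoiding n (s.piecewise g fun k ↦ c k) := by
  intro a d ha hd hn
  have hd_mem : d ∈ Finset.Icc 1 n.sqrt :=
    Finset.mem_Icc.2 ⟨hd, Nat.le_sqrt'.2 (le_of_add_le_right hn)⟩
  by_cases has : a ∈ s
  · exact ne_above a has d hd_mem hn
  by_cases hbs : a + d ^ 2 ∈ s
  · have h_ne := ne_below _ hbs d hd_mem (by lia)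
    rwa [Nat.add_sub_cancel] at h_ne
  have hd_ne : (d : R) ≠ 0 := fun h ↦
    (cover d hd_mem h a (Finset.mem_Icc.2 ⟨ha, Nat.le_sub_of_add_le hn⟩)).elim has hbs
  simpa only [Finset.piecewise_eq_of_notMem s _ _ has, Finset.piecewise_eq_of_notMem s _ _ hbs]
    using hc.natCast_ne a hd_ne

end IsPaleyColoring

/-- A 5-coloring of the Paley graph on `ZMod 13`, listed by residue. -/
def paleyColor : ZMod 13 → Fin 5 :=
  ![0, 1, 0, 4, 2, 4, 1, 0, 1, 2, 3, 2, 3]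

theorem isPaleyColoring_paleyColor : IsPaleyColoring paleyColor := by
  unfold IsPaleyColoring
  decide

/-- The elements of `[180]` whose color differs from that of their residue modulo 13: one from each
pair `{a, a + 169}`, and `44`, `50`, `57`, `101`, `127`, `140`, `147`, `167`. The set was found by
a SAT search for a repair with few changes. -/
def recolored : Finset ℕ :=
  {1, 3, 4, 6, 8, 10, 44, 50, 57, 101, 127, 140, 147, 167, 171, 174, 176, 178, 180}

/-- The new colors of the elements of `recolored`; the values elsewhere are irrelevant. -/
def newColor (k : ℕ) : Fin 5 :=
  if k ∈ ({3, 171} : Finset ℕ) then 2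
  else if k ∈ ({1, 4, 6, 44, 57, 147, 174, 176} : Finset ℕ) then 3
  else 4

/-- The coloring of `[180]` witnessing the bound: residues modulo 13, corrected on `recolored`. -/
def repairedColor : ℕ → Fin 5 :=
  recolored.piecewise newColor fun k ↦ paleyColor k

theorem mem_recolored_or_add_sq_mem_recolored :
    ∀ d ∈ Finset.Icc 1 (Nat.sqrt 180), (d : ZMod 13) = 0 →
      ∀ a ∈ Finset.Icc 1 (180 - d ^ 2), a ∈ recolored ∨ a + d ^ 2 ∈ recolored := by
  decide +kernel

theorem repairedColor_ne_add_sq :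
    ∀ a ∈ recolored, ∀ d ∈ Finset.Icc 1 (Nat.sqrt 180), a + d ^ 2 ≤ 180 →
      repairedColor a ≠ repairedColor (a + d ^ 2) := by
  decide +kernel

theorem repairedColor_sub_sq_ne :
    ∀ b ∈ recolored, ∀ d ∈ Finset.Icc 1 (Nat.sqrt 180), d ^ 2 < b →
      repairedColor (b - d ^ 2) ≠ repairedColor b := by
  decide +kernel

theorem isSquareAvoiding_repairedColor : IsSquareAvoiding 180 repairedColor :=
  isPaleyColoring_paleyColor.isSquareAvoiding_piecewise mem_recolored_or_add_sq_mem_recolored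
    repairedColor_ne_add_sq repairedColor_sub_sq_ne

/-- `R₅(VS) > 180`: there is a 5-coloring of `[180]` with no two same-colored
integers a perfect square apart. -/
theorem R5VS_gt_180 :
    ∃ f : ℕ → Fin 5,
      ¬ ∃ a d : ℕ, 1 ≤ a ∧ 1 ≤ d ∧ a + d ^ 2 ≤ 180 ∧ f a = f (a + d ^ 2) := by
  refine ⟨repairedColor, ?_⟩
  rintro ⟨a, d, ha, hd, had, h⟩
  exact isSquareAvoiding_repairedColor a d ha hd had h
end

section
/- There exists a 6-coloring f of [333] = {1,...,333} with no two integers of the same color a perfect square apart; that is, there are no a ∈ [333] and positive integer d with a + d² ≤ 333 and f(a) = f(a + d²). Consequently R_6(VS) > 333. -/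
/-!
Cut the circle `ℤ/40` into six arcs of length at most `7`, and color `n` by the arc that contains
`7 * n`. A shift by `δ` leaves every arc as soon as `7 * δ` is at circular distance at least `7`
from `0` modulo `40`. The nonzero squares modulo `40` are `1, 4, 9, 16, 20, 24, 25, 36`; multiplied
by `7` they become `7, 28, 23, 32, 20, 8, 15, 12`, all between `7` and `33`. Since `40 ∣ d ^ 2` only
if `20 ∣ d`, the first monochromatic square difference that can occur is `20 ^ 2 = 400`.
-/

theorem div_lt_div_of_add_le {w x y : ℕ} (hw : 0 < w) (hxy : x + w ≤ y) : x / w < y / w :=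
  calc
    x / w < (x + w) / w := by rw [Nat.add_div_right x hw]; exact Nat.lt_succ_self _
    _ ≤ y / w := Nat.div_le_div_right hxy

theorem mod_div_ne_add_mod_div {m w δ : ℕ} (hw : 0 < w) (hδ : w ≤ δ % m) (hδm : δ % m + w ≤ m)
    (x : ℕ) : x % m / w ≠ (x + δ) % m / w := by
  rcases lt_or_ge (x % m + δ % m) m with no_wrap | wrap
  · rw [Nat.add_mod_of_add_mod_lt no_wrap]
    exact (div_lt_div_of_add_le hw (by lia)).ne
  · have shifted : (x + δ) % m + m = x % m + δ % m := Nat.add_mod_add_of_le_add_mod wrap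
    exact (div_lt_div_of_add_le hw (by lia)).ne'

theorem exists_coloring_of_mul_mod {c m w k : ℕ} {D : Set ℕ} (hm : 0 < m) (hc : m ≤ w * c)
    (hD : ∀ δ ∈ D, w ≤ k * δ % m ∧ k * δ % m + w ≤ m) :
    ∃ f : ℕ → Fin c, ∀ a, ∀ δ ∈ D, f a ≠ f (a + δ) := by
  have hw : 0 < w := Nat.pos_of_mul_pos_right (hm.trans_le hc)
  refine ⟨fun n ↦ ⟨k * n % m / w, Nat.div_lt_of_lt_mul ((Nat.mod_lt _ hm).trans_le hc)⟩, ?_⟩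
  intro a δ hδ same_color
  refine mod_div_ne_add_mod_div hw (hD δ hδ).1 (hD δ hδ).2 (k * a) ?_
  rw [← mul_add]
  exact congrArg Fin.val same_color

theorem seven_mul_sq_mod_forty_bounds {d : ℕ} (hd : ¬ 20 ∣ d) :
    7 ≤ 7 * d ^ 2 % 40 ∧ 7 * d ^ 2 % 40 + 7 ≤ 40 := by
  have bounds_of_lt : ∀ r < 40, ¬ 20 ∣ r → 7 ≤ 7 * r ^ 2 % 40 ∧ 7 * r ^ 2 % 40 + 7 ≤ 40 := by
    decide
  have reduce : 7 * (d % 40) ^ 2 % 40 = 7 * d ^ 2 % 40 := ((Nat.mod_modEq d 40).pow 2).mul_left 7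
  rw [← reduce]
  exact bounds_of_lt (d % 40) (Nat.mod_lt d (by norm_num))
    (mt (Nat.dvd_mod_iff (by norm_num)).mp hd)

theorem R6VS_gt_333_general :
    ∃ f : ℕ → Fin 6, ∀ a d : ℕ, ¬ 20 ∣ d → f a ≠ f (a + d ^ 2) := by
  obtain ⟨f, hf⟩ := exists_coloring_of_mul_mod (c := 6) (m := 40) (w := 7) (k := 7)
    (D := {δ | ∃ d, ¬ 20 ∣ d ∧ d ^ 2 = δ}) (by norm_num) (by norm_num)
    (by rintro _ ⟨d, hd, rfl⟩; exact seven_mul_sq_mod_forty_bounds hd)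
  exact ⟨f, fun a d hd ↦ hf a (d ^ 2) ⟨d, hd, rfl⟩⟩

/-- `R₆(VS) > 333`: there is a 6-coloring of `[333]` with no two same-colored
integers a perfect square apart. -/
theorem R6VS_gt_333 :
    ∃ f : ℕ → Fin 6,
      ¬ ∃ a d : ℕ, 1 ≤ a ∧ 1 ≤ d ∧ a + d ^ 2 ≤ 333 ∧ f a = f (a + d ^ 2) := by
  obtain ⟨f, hf⟩ := R6VS_gt_333_general
  refine ⟨f, fun ⟨a, d, _, hd, hle, same_color⟩ ↦ ?_⟩
  have d_lt : d < 20 := by nlinarith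
  exact hf a d (Nat.not_dvd_of_pos_of_lt hd d_lt) same_color
end

section
/- There exists a 3-coloring f of [521] = {1,...,521} with no two integers of the same color a perfect cube apart; that is, there are no a ∈ [521] and positive integer d with a + d³ ≤ 521 and f(a) = f(a + d³). Consequently R_3(VC) > 521. -/
/-!
Color `ℕ` so that `f (x + 216) = f x + 1` in `ℤ/3`. Distance `216 = 6 ^ 3` is then harmless, and
whether `f x ≠ f (x + k)` depends only on `x` modulo `216`. One period of colors found by a SAT
solver avoids the distances `1, 8, 27, 64, 125` on all of `ℕ`; the distances `343` and `512` do
occur, but not between points of `[1, 521]`, and `9 ^ 3 > 521`.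
-/

namespace VanDerCube

open scoped AddConstMap

section Quasiperiodic

variable {G : Type*} [AddMonoid G] {p : ℕ} {g : G}

/-- The quasiperiodic extension of a word `w 0, …, w (p - 1)`: the map on `ℕ` that agrees with `w`
below `p` and increases by `g` under translation by `p`. -/
def quasiperiodicExtension (p : ℕ) [NeZero p] (g : G) (w : ℕ → G) : ℕ →+c[p, g] G where
  toFun x := w (x % p) + (x / p) • g
  map_add_const' x := by
    rw [Nat.add_mod_right, Nat.add_div_right x (NeZero.pos p), succ_nsmul, add_assoc]

theorem ne_map_add_iff_mod [IsRightCancelAdd G] (f : ℕ →+c[p, g] G) (k x : ℕ) :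
    f x ≠ f (x + k) ↔ f (x % p) ≠ f (x % p + k) := by
  have translate (y : ℕ) : f (y + (x / p) • p) = f y + (x / p) • g :=
    AddConstMapClass.map_add_nsmul f y (x / p)
  have hx : x % p + (x / p) • p = x := Nat.mod_add_div' x p
  calc f x ≠ f (x + k)
      ↔ f (x % p + (x / p) • p) ≠ f (x % p + k + (x / p) • p) := by rw [add_right_comm, hx]
    _ ↔ f (x % p) ≠ f (x % p + k) := by rw [translate, translate, (add_left_injective _).ne_iff]

theorem ne_map_add_of_forall_lt [NeZero p] [IsRightCancelAdd G] (f : ℕ →+c[p, g] G) {k : ℕ}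
    (h : ∀ r < p, f r ≠ f (r + k)) (x : ℕ) : f x ≠ f (x + k) :=
  (ne_map_add_iff_mod f k x).2 (h _ (Nat.mod_lt x (NeZero.pos p)))

end Quasiperiodic

/-- The colors of `0, …, 215`, found by a SAT solver. -/
def colorWord : List (Fin 3) :=
  [2, 1, 2, 1, 2, 0, 2, 0, 1, 2, 0, 2, 0, 1, 0, 1, 2, 0, 1, 0, 1, 2, 1, 2,
   0, 1, 2, 1, 2, 1, 2, 1, 2, 0, 1, 2, 1, 2, 0, 2, 0, 1, 2, 1, 2, 0, 2, 0,
   1, 2, 0, 2, 0, 1, 0, 1, 2, 1, 2, 0, 2, 0, 1, 2, 0, 2, 0, 2, 0, 1, 0, 1,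
   2, 0, 1, 0, 1, 2, 1, 2, 0, 1, 2, 1, 2, 0, 2, 0, 1, 2, 1, 2, 1, 2, 1, 2,
   0, 1, 2, 1, 2, 0, 2, 0, 1, 2, 0, 2, 0, 1, 0, 1, 2, 0, 1, 0, 1, 2, 1, 2,
   1, 2, 0, 1, 0, 1, 2, 0, 2, 0, 1, 0, 1, 2, 1, 2, 0, 1, 2, 1, 2, 0, 2, 0,
   1, 2, 1, 2, 0, 2, 0, 1, 2, 0, 2, 0, 2, 0, 2, 0, 1, 2, 0, 2, 0, 1, 0, 1,
   2, 0, 1, 0, 1, 2, 1, 2, 0, 1, 2, 1, 2, 1, 2, 0, 2, 0, 1, 2, 1, 2, 0, 1,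
   0, 1, 2, 1, 2, 0, 2, 0, 1, 2, 0, 2, 0, 1, 0, 1, 2, 0, 2, 0, 1, 0, 1, 2]

/-- The 3-coloring of `ℕ` that extends `colorWord` and rotates the colors every `216` steps. Its
restriction to `[521]` witnesses the lower bound. The default value `0` is never used, since
`colorWord` has length `216`. -/
def coloring : ℕ →+c[216, 1] Fin 3 :=
  quasiperiodicExtension 216 1 fun r => colorWord.getD r 0

theorem coloring_ne_add_pow_three_of_lt_six {d : ℕ} (hd : 1 ≤ d) (hd6 : d < 6) (x : ℕ) :
    coloring x ≠ coloring (x + d ^ 3) := by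
  have one_period : ∀ d < 6, 1 ≤ d → ∀ r < 216, coloring r ≠ coloring (r + d ^ 3) := by
    decide +kernel
  exact ne_map_add_of_forall_lt coloring (one_period d hd6 hd) x

theorem coloring_ne_add_six_pow_three (x : ℕ) : coloring x ≠ coloring (x + 6 ^ 3) := by
  have rotate : coloring (x + 6 ^ 3) = coloring x + 1 := AddConstMapClass.map_add_const coloring x
  rw [rotate]
  exact (add_ne_left.2 one_ne_zero).symm

theorem coloring_ne_add_seven_pow_three {x : ℕ} (hx : x + 7 ^ 3 ≤ 521) :
    coloring x ≠ coloring (x + 7 ^ 3) := by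
  have all_up_to_178 : ∀ x ≤ 178, coloring x ≠ coloring (x + 7 ^ 3) := by decide +kernel
  exact all_up_to_178 x (by omega)

theorem coloring_ne_add_eight_pow_three {x : ℕ} (hx : 1 ≤ x) (hx' : x + 8 ^ 3 ≤ 521) :
    coloring x ≠ coloring (x + 8 ^ 3) := by
  have one_to_nine : ∀ x ≤ 9, 1 ≤ x → coloring x ≠ coloring (x + 8 ^ 3) := by decide +kernel
  exact one_to_nine x (by omega) hx

end VanDerCube

/-- `R₃(VC) > 521`: there is a 3-coloring of `[521]` with no two same-colored
integers a perfect cube apart. -/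
theorem R3VC_gt_521 :
    ∃ f : ℕ → Fin 3,
      ¬ ∃ a d : ℕ, 1 ≤ a ∧ 1 ≤ d ∧ a + d ^ 3 ≤ 521 ∧ f a = f (a + d ^ 3) := by
  refine ⟨VanDerCube.coloring, ?_⟩
  rintro ⟨a, d, ha, hd, hle, same_color⟩
  have hd9 : d < 9 := lt_of_pow_lt_pow_left₀ 3 (by decide) (by omega : d ^ 3 < 9 ^ 3)
  obtain hd6 | rfl | rfl | rfl : d < 6 ∨ d = 6 ∨ d = 7 ∨ d = 8 := by omega
  · exact VanDerCube.coloring_ne_add_pow_three_of_lt_six hd hd6 a same_color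
  · exact VanDerCube.coloring_ne_add_six_pow_three a same_color
  · exact VanDerCube.coloring_ne_add_seven_pow_three hle same_color
  · exact VanDerCube.coloring_ne_add_eight_pow_three ha hle same_color
end

section
/- For every 2-coloring f of [9] = {1,...,9} there exist two integers of the same color that are a perfect cube apart; that is, there exist a ∈ [9] and a positive integer d with a + d³ ≤ 9 and f(a) = f(a + d³). -/
/-!
The steps `1 = 1 ^ k` and `2 ^ k` join `1, 2, …, 2 ^ k + 1` into a cycle of odd length, and an odd
cycle has no proper coloring with two colors.
-/

section TwoColorings

open SimpleGraph

variable {α : Type*} [Fintype α]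

theorem exists_apply_eq_apply_add_one_of_odd (hα : Fintype.card α ≤ 2) {n : ℕ} [NeZero n]
    (hn : Odd n) (c : Fin n → α) : ∃ i, c i = c (i + 1) := by
  obtain rfl | hn_one := eq_or_ne n 1
  · exact ⟨0, congrArg c (Subsingleton.elim _ _)⟩
  have two_le : 2 ≤ n := (Nat.two_le_iff n).2 ⟨NeZero.ne n, hn_one⟩
  by_contra! hc
  have proper : ∀ {i j}, (cycleGraph n).Adj i j → c i ≠ c j := by
    obtain ⟨m, rfl⟩ := Nat.exists_eq_add_of_le' two_le
    rintro i j (h | h)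
    · rw [sub_eq_iff_eq_add'.1 h]
      exact (hc j).symm
    · rw [sub_eq_iff_eq_add'.1 h]
      exact hc i
  have colorable : (cycleGraph n).Colorable 2 := (Coloring.mk c proper).colorable.mono hα
  have three_le_two := colorable.chromaticNumber_le
  rw [chromaticNumber_cycleGraph_of_odd n two_le hn] at three_le_two
  exact absurd three_le_two (by decide)

theorem exists_apply_eq_apply_succ_or_apply_eq_apply_add_of_even (hα : Fintype.card α ≤ 2)
    {m : ℕ} (hm : Even m) (f : ℕ → α) (a : ℕ) :
    (∃ i < m, f (a + i) = f (a + i + 1)) ∨ f a = f (a + m) := by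
  obtain ⟨i, hi⟩ := exists_apply_eq_apply_add_one_of_odd hα hm.add_one
    fun i : Fin (m + 1) ↦ f (a + i)
  cases i using Fin.lastCases with
  | last => exact .inr (by simpa using hi.symm)
  | cast i => exact .inl ⟨i, i.is_lt, by simpa [add_assoc] using hi⟩

theorem R2VC_upper_general (hα : Fintype.card α ≤ 2) {k : ℕ} (hk : k ≠ 0) (f : ℕ → α) :
    ∃ a d : ℕ, 1 ≤ a ∧ 1 ≤ d ∧ a + d ^ k ≤ 2 ^ k + 1 ∧ f a = f (a + d ^ k) := by
  obtain ⟨i, hi, h_eq⟩ | h_eq :=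
    exists_apply_eq_apply_succ_or_apply_eq_apply_add_of_even hα (even_two.pow_of_ne_zero hk) f 1
  · exact ⟨1 + i, 1, by omega, le_rfl, by rw [one_pow]; omega, by rwa [one_pow]⟩
  · exact ⟨1, 2, le_rfl, one_le_two, (add_comm _ _).le, h_eq⟩

end TwoColorings

/-- Upper-bound half of `R₂(VC) = 9`: every 2-coloring of `[9]` contains two
same-colored integers a perfect cube apart. -/
theorem R2VC_upper (f : ℕ → Fin 2) :
    ∃ a d : ℕ, 1 ≤ a ∧ 1 ≤ d ∧ a + d ^ 3 ≤ 9 ∧ f a = f (a + d ^ 3) :=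
  R2VC_upper_general (Fintype.card_fin 2).le three_ne_zero f
end

section
/- Let n be a positive integer and let f be a 3-coloring of the grid [n] × [n] containing no monochromatic L. Then some color occurs at least n/3 times among the diagonal points (i, i), 1 ≤ i ≤ n, and for every pair i < j of diagonal points of that common color, the point (i, j') with j' chosen so that (i, i), (i, j), (j, j) would form an L — namely the point (i, j) below the diagonal completing the L with the two diagonal points — cannot receive that color. In particular, at least (⌈n/3⌉ choose 2) points strictly below the diagonal are forbidden from that color. -/
open Finset

/-- The coloring `f` has no monochromatic `L` inside the grid `{1, …, n} × {1, …, n}`. An `L` is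
encoded by its corner data `(i, j, t)`; its last point `(i + t, j + t)` decides whether it lies in
the grid. The coloring is defined on all of `ℕ × ℕ`, but only its values on the grid matter. -/
def IsLFree {κ : Type*} (n : ℕ) (f : ℕ × ℕ → κ) : Prop :=
  ¬ ∃ i j t : ℕ, 1 ≤ i ∧ 1 ≤ j ∧ 1 ≤ t ∧ i + t ≤ n ∧ j + t ≤ n ∧
    f (i, j) = f (i, j + t) ∧ f (i, j) = f (i + t, j + t)

theorem IsLFree.apply_ne_of_diag_eq {κ : Type*} {n : ℕ} {f : ℕ × ℕ → κ} (hf : IsLFree n f)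
    {i j : ℕ} (hi : 1 ≤ i) (hj : j ≤ n) (hij : i < j) (hdiag : f (i, i) = f (j, j)) :
    f (i, j) ≠ f (i, i) := by
  intro hcorner
  have hadd : i + (j - i) = j := Nat.add_sub_of_le hij.le
  refine hf ⟨i, i, j - i, hi, hi, Nat.sub_pos_of_lt hij, ?_⟩
  rw [hadd]
  exact ⟨hj, hj, hcorner.symm, hdiag⟩

theorem exists_card_le_card_mul_card_fiber_s18 {α κ : Type*} [Fintype κ] [Nonempty κ] [DecidableEq κ]
    (s : Finset α) (c : α → κ) :
    ∃ k, #s ≤ Fintype.card κ * #{a ∈ s | c a = k} := by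
  obtain ⟨k, hmax⟩ := Finite.exists_max fun k => #{a ∈ s | c a = k}
  refine ⟨k, ?_⟩
  rw [mul_comm]
  exact card_le_mul_card_image_of_maps_to (fun a _ => mem_univ (c a)) _ fun l _ => hmax l

theorem L_free_diagonal_pigeonhole_general {α κ : Type*} [LinearOrder α] [Fintype κ] [Nonempty κ]
    (s : Finset α) (f : α × α → κ)
    (hf : ∀ i ∈ s, ∀ j ∈ s, i < j → f (i, i) = f (j, j) → f (i, j) ≠ f (i, i)) :
    ∃ (k : κ) (S : Finset α), S ⊆ s ∧ #s ≤ Fintype.card κ * #S ∧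
      (∀ i ∈ S, f (i, i) = k) ∧
      (∀ i ∈ S, ∀ j ∈ S, i < j → f (i, j) ≠ k) ∧
      (#s ⌈/⌉ Fintype.card κ).choose 2 ≤ #{p ∈ S ×ˢ S | p.1 < p.2} := by
  classical
  obtain ⟨k, hk⟩ := exists_card_le_card_mul_card_fiber_s18 s fun i => f (i, i)
  refine ⟨k, {i ∈ s | f (i, i) = k}, filter_subset _ _, hk, fun i hi => (mem_filter.1 hi).2, ?_, ?_⟩
  · intro i hi j hj hij
    obtain ⟨his, rfl⟩ := mem_filter.1 hi
    obtain ⟨hjs, hji⟩ := mem_filter.1 hj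
    exact hf i his j hjs hij hji.symm
  · rw [card_product_filter_lt]
    exact Nat.choose_le_choose 2 ((ceilDiv_le_iff_le_mul Fintype.card_pos).2 hk)

/-- First intermediate claim in the proof of Theorem 2.3: if a 3-coloring of the
`[n] × [n]` grid has no monochromatic `L`, then some color `k` occurs on a set `S`
of at least `n/3` diagonal points `(i, i)`, and for every pair `i < j` in `S` the
point `(i, j)` completing the `L` with `(i, i)` and `(j, j)` cannot get color `k`;
in particular at least `⌈n/3⌉ choose 2` off-diagonal points are forbidden from
color `k`. -/
theorem L_free_diagonal_pigeonhole (n : ℕ) (hn : 1 ≤ n) (f : ℕ × ℕ → Fin 3)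
    (hL : ¬ ∃ i j t : ℕ, 1 ≤ i ∧ 1 ≤ j ∧ 1 ≤ t ∧ i + t ≤ n ∧ j + t ≤ n ∧
      f (i, j) = f (i, j + t) ∧ f (i, j) = f (i + t, j + t)) :
    ∃ (k : Fin 3) (S : Finset ℕ), S ⊆ Finset.Icc 1 n ∧ n ≤ 3 * S.card ∧
      (∀ i ∈ S, f (i, i) = k) ∧
      (∀ i ∈ S, ∀ j ∈ S, i < j → f (i, j) ≠ k) ∧
      Nat.choose ((n + 2) / 3) 2 ≤
        ((S ×ˢ S).filter fun p => p.1 < p.2).card := by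
  simpa [Nat.ceilDiv_eq_add_pred_div] using
    L_free_diagonal_pigeonhole_general (Icc 1 n) f fun i hi j hj =>
      IsLFree.apply_ne_of_diag_eq hL (mem_Icc.1 hi).1 (mem_Icc.1 hj).2
end
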